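/- Let n ∈ ℕ, let q be a complex number with q^j ≠ 1 for all 1 ≤ j ≤ n, let x be a complex number with (xq;q)_j ≠ 0 for all 0 ≤ j ≤ 2n, and let a₀, a₁, …, a_n be arbitrary complex numbers (with q ≠ 0). Then Σ_{k=0}^n a_k·x^k / ((q;q)_{n−k}·(xq;q)_{n+k}) = Σ_{j=0}^n (q^{j²}·x^j/(q;q)_{n−j}) · Σ_{k=0}^j a_k·q^{−k²} / ((q;q)_{j−k}·(xq;q)_{j+k}). -/

import Mathlib

/-- The finite q-Pochhammer symbol `(x;q)_n = ∏_{i=1}^n (1 - x q^{i-1})`. -/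
noncomputable def qPoch (q x : ℂ) (n : ℕ) : ℂ := ∏ i ∈ Finset.range n, (1 - x * q ^ i)

theorem qPoch_succ (q x : ℂ) (n : ℕ) : qPoch q x (n + 1) = qPoch q x n * (1 - x * q ^ n) := by
  simp [qPoch, Finset.prod_range_succ]

theorem qPoch_add (q x : ℂ) (a b : ℕ) :
    qPoch q x (a + b) = qPoch q x a * qPoch q (x * q ^ a) b := by
  simp [qPoch, Finset.prod_range_add, pow_add, mul_assoc]

theorem qPoch_succ' (q x : ℂ) (n : ℕ) :
    qPoch q x (n + 1) = (1 - x) * qPoch q (x * q) n := by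
  rw [add_comm, qPoch_add]
  simp [qPoch]

theorem qPoch_zero' (q x : ℂ) : qPoch q x 0 = 1 := by simp [qPoch]

theorem qPoch_ne (q y : ℂ) (n : ℕ) (h : ∀ j : ℕ, 1 ≤ j → j ≤ n → 1 - y * q ^ j ≠ 0) :
    qPoch q (y * q) n ≠ 0 := by
  unfold qPoch
  rw [Finset.prod_ne_zero_iff]
  intro i hi
  have := h (i + 1) (by omega) (by simpa using hi)
  rwa [pow_succ', ← mul_assoc] at this

theorem key_sum (q : ℂ) (m : ℕ) : ∀ (y : ℂ)
    (_ : ∀ j : ℕ, 1 ≤ j → j ≤ m → q ^ j ≠ 1)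
    (_ : ∀ j : ℕ, 1 ≤ j → j ≤ m → 1 - y * q ^ j ≠ 0),
    ∑ i ∈ Finset.range (m + 1),
      q ^ (i ^ 2) * y ^ i / (qPoch q q (m - i) * qPoch q q i * qPoch q (y * q) i)
      = 1 / (qPoch q q m * qPoch q (y * q) m) := by
  induction m with
  | zero => intro y _ _; simp [qPoch]
  | succ m ih =>
    intro y hq hy
    have hqq : ∀ i, i ≤ m + 1 → qPoch q q i ≠ 0 := by
      intro i hi
      have := qPoch_ne q 1 i (fun j h1 h2 => by
        rw [one_mul]; exact sub_ne_zero.2 (hq j h1 (by omega)).symm)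
      rwa [one_mul] at this
    have hyq : ∀ i, i ≤ m + 1 → qPoch q (y * q) i ≠ 0 := fun i hi =>
      qPoch_ne q y i (fun j h1 h2 => hy j h1 (by omega))
    have hyqq : ∀ i, i ≤ m → qPoch q (y * q * q) i ≠ 0 := fun i hi =>
      qPoch_ne q (y * q) i (fun j h1 h2 => by
        have := hy (j + 1) (by omega) (by omega)
        rwa [pow_succ', ← mul_assoc] at this)
    have i1 := ih y (fun j h1 h2 => hq j h1 (by omega)) (fun j h1 h2 => hy j h1 (by omega))
    have i2 := ih (y * q) (fun j h1 h2 => hq j h1 (by omega)) (fun j h1 h2 => by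
        have := hy (j + 1) (by omega) (by omega)
        rwa [pow_succ', ← mul_assoc] at this)
    have hm : 1 - q ^ (m + 1) ≠ 0 := sub_ne_zero.2 (hq (m + 1) (by omega) le_rfl).symm
    have hy1 : 1 - y * q ≠ 0 := by simpa using hy 1 le_rfl (by omega)
    apply mul_left_cancel₀ hm
    let F : ℕ → ℂ := fun i =>
      q ^ (i ^ 2) * y ^ i / (qPoch q q (m + 1 - i) * qPoch q q i * qPoch q (y * q) i)
    have split : (1 - q ^ (m + 1)) * ∑ i ∈ Finset.range (m + 1 + 1), F i =
        ∑ i ∈ Finset.range (m + 1 + 1), (1 - q ^ (m + 1 - i)) * F i +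
        ∑ i ∈ Finset.range (m + 1 + 1), q ^ (m + 1 - i) * (1 - q ^ i) * F i := by
      rw [Finset.mul_sum, ← Finset.sum_add_distrib]
      refine Finset.sum_congr rfl fun i hi => ?_
      have : q ^ (m + 1) = q ^ (m + 1 - i) * q ^ i := by
        rw [← pow_add, Nat.sub_add_cancel (by simp at hi; omega)]
      rw [this]; ring
    have s1 : ∑ i ∈ Finset.range (m + 1 + 1), (1 - q ^ (m + 1 - i)) * F i =
        1 / (qPoch q q m * qPoch q (y * q) m) := by
      rw [Finset.sum_range_succ, ← i1]
      simp only [Nat.sub_self, pow_zero, sub_self, zero_mul, add_zero]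
      refine Finset.sum_congr rfl fun i hi => ?_
      obtain ⟨r, rfl⟩ : ∃ r, m = i + r := ⟨m - i, by simp at hi; omega⟩
      have e1 : i + r + 1 - i = r + 1 := by omega
      have e2 : i + r - i = r := by omega
      simp only [F, e1, e2]
      have a1 := hqq (r + 1) (by omega)
      have a2 := hqq i (by omega)
      have a3 := hyq i (by omega)
      rw [qPoch_succ, ← pow_succ'] at a1 ⊢
      have a4 := left_ne_zero_of_mul a1
      have a5 := right_ne_zero_of_mul a1
      field_simp
    have s2 : ∑ i ∈ Finset.range (m + 1 + 1), q ^ (m + 1 - i) * (1 - q ^ i) * F i =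
        q ^ (m + 1) * y / (1 - y * q) * (1 / (qPoch q q m * qPoch q (y * q * q) m)) := by
      rw [Finset.sum_range_succ', ← i2, Finset.mul_sum]
      simp only [pow_zero, sub_self, mul_zero, zero_mul, add_zero]
      refine Finset.sum_congr rfl fun i hi => ?_
      obtain ⟨r, rfl⟩ : ∃ r, m = i + r := ⟨m - i, by simp at hi; omega⟩
      have e1 : i + r + 1 - (i + 1) = r := by omega
      have e2 : i + r - i = r := by omega
      simp only [F, e1, e2]
      have a1 := hqq (i + 1) (by omega)
      have a2 := hqq r (by omega)
      have a3 := hyqq i (by omega)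
      rw [qPoch_succ' q (y * q)]
      rw [qPoch_succ, ← pow_succ'] at a1 ⊢
      have a4 := left_ne_zero_of_mul a1
      have a5 := right_ne_zero_of_mul a1
      field_simp
      ring
    change (1 - q ^ (m + 1)) * ∑ i ∈ Finset.range (m + 1 + 1), F i = _
    rw [split, s1, s2]
    have b1 := hqq m (by omega)
    have b2 := hyq m (by omega)
    have b3 := hyqq m le_rfl
    have b4 := hyq (m + 1) le_rfl
    have b5 : qPoch q (y * q) m * (1 - y * q ^ (m + 1)) = (1 - y * q) * qPoch q (y * q * q) m := by
      rw [← qPoch_succ', qPoch_succ, pow_succ' q m, mul_assoc y q]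
    have b6 := hy (m + 1) (by omega) le_rfl
    have c : q ^ (m + 1) * y / (1 - y * q) * (1 / (qPoch q q m * qPoch q (y * q * q) m)) =
        q ^ (m + 1) * y / (qPoch q q m * (qPoch q (y * q) m * (1 - y * q ^ (m + 1)))) := by
      rw [b5]; field_simp
    rw [c, qPoch_succ q q, ← pow_succ', qPoch_succ q (y * q), mul_assoc y q, ← pow_succ']
    field_simp
    ring

theorem stmt_13 (n : ℕ) (q x : ℂ) (hq0 : q ≠ 0)
    (hq : ∀ j : ℕ, 1 ≤ j → j ≤ n → q ^ j ≠ 1)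
    (hx : ∀ j : ℕ, j ≤ 2 * n → qPoch q (x * q) j ≠ 0)
    (a : ℕ → ℂ) :
    ∑ k ∈ Finset.range (n + 1),
        a k * x ^ k / (qPoch q q (n - k) * qPoch q (x * q) (n + k))
      = ∑ j ∈ Finset.range (n + 1),
          q ^ (j ^ 2) * x ^ j / qPoch q q (n - j) *
            ∑ k ∈ Finset.range (j + 1),
              a k * q ^ (-((k : ℤ) ^ 2)) / (qPoch q q (j - k) * qPoch q (x * q) (j + k)) := by
  simp_rw [Finset.mul_sum]
  rw [Finset.sum_comm' (t' := Finset.range (n + 1)) (s' := fun k => Finset.Ico k (n + 1))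
    (by intro i j; simp; omega)]
  refine Finset.sum_congr rfl fun k hk => ?_
  obtain ⟨m, rfl⟩ : ∃ m, n = k + m := ⟨n - k, by simp at hk; omega⟩
  have hx1 : ∀ j, 1 ≤ j → j ≤ 2 * (k + m) → 1 - x * q ^ j ≠ 0 := by
    intro j h1 h2
    obtain ⟨i, rfl⟩ : ∃ i, j = i + 1 := ⟨j - 1, by omega⟩
    have := hx (i + 1) h2
    rw [qPoch_succ, mul_assoc x q, ← pow_succ'] at this
    exact right_ne_zero_of_mul this
  have K := key_sum q m (x * q ^ (2 * k)) (fun j h1 h2 => hq j h1 (by omega))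
    (fun j h1 h2 => by
      have := hx1 (2 * k + j) (by omega) (by omega)
      rwa [pow_add, ← mul_assoc] at this)
  have hsh : ∀ i, qPoch q (x * q) (2 * k + i) =
      qPoch q (x * q) (2 * k) * qPoch q (x * q ^ (2 * k) * q) i := by
    intro i
    rw [qPoch_add]; congr 2; ring
  rw [Finset.sum_Ico_eq_sum_range]
  have e1 : k + m - k = m := by omega
  have e2 : k + m + 1 - k = m + 1 := by omega
  have e3 : k + m + k = 2 * k + m := by omega
  rw [e1, e2, e3, hsh]
  have L : a k * x ^ k / (qPoch q q m *
      (qPoch q (x * q) (2 * k) * qPoch q (x * q ^ (2 * k) * q) m)) =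
      a k * x ^ k / qPoch q (x * q) (2 * k) *
        (1 / (qPoch q q m * qPoch q (x * q ^ (2 * k) * q) m)) := by
    rw [div_mul_div_comm, mul_one]; congr 1; ring
  rw [L, ← K, Finset.mul_sum]
  refine Finset.sum_congr rfl fun i hi => ?_
  have f1 : k + m - (k + i) = m - i := by omega
  have f2 : k + i - k = i := by omega
  have f3 : k + i + k = 2 * k + i := by omega
  rw [f1, f2, f3, hsh, div_mul_div_comm, div_mul_div_comm]
  have z : q ^ (-((k : ℤ) ^ 2)) = (q ^ (k ^ 2))⁻¹ := by
    rw [zpow_neg]; norm_cast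
  have p : q ^ ((k + i) ^ 2) = q ^ (k ^ 2) * (q ^ (i ^ 2) * (q ^ (2 * k)) ^ i) := by
    rw [← pow_mul, ← pow_add, ← pow_add]; congr 1; ring
  have hk0 : q ^ (k ^ 2) ≠ 0 := pow_ne_zero _ hq0
  rw [z, p]
  congr 1
  · rw [mul_pow, pow_add]; field_simp
  · ring
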